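/- Let P : ℤ → ℝ² be a type-α k-spiral representative from index N (k ≥ 3): for all i ≥ N, (Pᵢ, Pᵢ₊₁, Pᵢ₊₂) and (Pᵢ, Pᵢ₊₁, Pᵢ₊ₖ₊₁) are positively oriented and Pᵢ₊ₖ ∈ int(Pᵢ, Pᵢ₊₁, Pᵢ₊ₖ₊₁). Suppose moreover each four-tuple (Pᵢ, Pᵢ₊₁, Pᵢ₊ₖ, Pᵢ₊ₖ₊₁) is in general position, and define P'ᵢ as the intersection of line PᵢPᵢ₊ₖ with line Pᵢ₊₁Pᵢ₊ₖ₊₁. Then for all i ≥ N, (P'ᵢ, P'ᵢ₊₁, P'ᵢ₊₂) and (P'ᵢ, P'ᵢ₊₁, P'ᵢ₊ₖ₊₁) are positively oriented and P'ᵢ₊ₖ ∈ int(P'ᵢ, P'ᵢ₊₁, P'ᵢ₊ₖ₊₁). -/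

import Mathlib

/-!
Write `D j = P (j+k) - P j`, so that `P' i` is the intersection of the lines spanned by `D i` at
`P i` and by `D (i+1)` at `P (i+1)`. Since `P (i+k)` is interior to the triangle
`P i, P (i+1), P (i+k+1)`, the point `P' i` lies beyond `P (i+k)` on the first line and strictly
between `P (i+1)` and `P (i+k+1)` on the second one (`exists_params`), and `D (i+1)` is a left turn
from `D i` (`det2_diag_pos`). On the line of `D (i+1)` the order is therefore
`P (i+1), P' i, P (i+k+1), P' (i+1)`. This gives the orientation of consecutive points of `P'`, and
it reduces the other two claims to `0 < det2 (D j) (D (j+k))` for `j = i + 1`, because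
`P' (i+k)` lies between `P (i+k+1)` and `P' (i+k+1)`.

That inequality (`det2_diag_far_pos`) is the heart of the matter. Measured from `P (j+k)`, let
`b = P (j+k+1)`, `b' = P (j+k-1)`, `c = P (j+2k)`, `d = D j`. The spiral conditions at
`j - 1`, `j`, `j + k - 1` and `j + k` say that `[d,b]`, `[d,b']`, `[b,b']`, `[c,b']`, `[b,c]` are
all positive, and the Plücker relation `[d,c][b,b'] = [b,c][d,b'] + [c,b'][d,b]` gives `[d,c] > 0`.
-/

def det2 (u v : ℝ × ℝ) : ℝ := u.1 * v.2 - u.2 * v.1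

def ori (A B C : ℝ × ℝ) : ℝ := det2 (B - A) (C - B)

def inTriangle (A B C W : ℝ × ℝ) : Prop :=
  ∃ l₁ l₂ l₃ : ℝ, l₁ ∈ Set.Ioo (0:ℝ) 1 ∧ l₂ ∈ Set.Ioo (0:ℝ) 1 ∧
    l₃ ∈ Set.Ioo (0:ℝ) 1 ∧ l₁ + l₂ + l₃ = 1 ∧ W = l₁ • A + l₂ • B + l₃ • C

lemma det2_eq_zero_of_collinear {A W X : ℝ × ℝ} (h : Collinear ℝ {A, W, X}) :
    det2 (W - A) (X - A) = 0 := by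
  obtain ⟨v, hv⟩ := (collinear_iff_of_mem (p₀ := A) (by simp)).1 h
  obtain ⟨r, hr⟩ := hv W (by simp)
  obtain ⟨s, hs⟩ := hv X (by simp)
  subst hr hs
  simp [det2]
  ring

/-- For `W` inside the positive triangle `A B C`, the direction `C - B` is a left turn from
`W - A`. -/
lemma det2_diag_pos {A B C W : ℝ × ℝ} (ho : 0 < ori A B C) (hW : inTriangle A B C W) :
    0 < det2 (W - A) (C - B) := by
  obtain ⟨l₁, l₂, l₃, h₁, h₂, h₃, hs, rfl⟩ := hW
  have h : 0 < (l₂ + l₃) * ori A B C := mul_pos (add_pos h₂.1 h₃.1) ho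
  obtain rfl : l₁ = 1 - l₂ - l₃ := by linarith
  convert h using 1
  simp [ori, det2]
  ring

/-- The three triangles cut out of the positive triangle `A B C` by an interior point `W` are
positively oriented. -/
lemma sides_pos {A B C W : ℝ × ℝ} (ho : 0 < ori A B C) (hW : inTriangle A B C W) :
    0 < det2 (B - A) (W - A) ∧ 0 < det2 (W - A) (C - W) ∧ 0 < det2 (C - B) (W - C) := by
  obtain ⟨l₁, l₂, l₃, h₁, h₂, h₃, hs, rfl⟩ := hW
  have e₁ : 0 < l₁ * ori A B C := mul_pos h₁.1 ho
  have e₂ : 0 < l₂ * ori A B C := mul_pos h₂.1 ho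
  have e₃ : 0 < l₃ * ori A B C := mul_pos h₃.1 ho
  obtain rfl : l₁ = 1 - l₂ - l₃ := by linarith
  refine ⟨?_, ?_, ?_⟩
  · convert e₃ using 1
    simp [ori, det2]
    ring
  · convert e₂ using 1
    simp [ori, det2]
    ring
  · convert e₁ using 1
    simp [ori, det2]
    ring

/-- The line from `A` through an interior point `W` of the triangle `A B C` meets the line `BC`
beyond `W` and strictly between `B` and `C`. -/
lemma exists_params {A B C W X : ℝ × ℝ} (ho : 0 < ori A B C) (hW : inTriangle A B C W)
    (h₁ : Collinear ℝ {A, W, X}) (h₂ : Collinear ℝ {B, C, X}) :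
    ∃ s t : ℝ, 1 < s ∧ 0 < t ∧ t < 1 ∧ X = A + s • (W - A) ∧ X = B + t • (C - B) := by
  have hd := det2_diag_pos ho hW
  have z₁ := det2_eq_zero_of_collinear h₁
  have z₂ := det2_eq_zero_of_collinear h₂
  obtain ⟨l₁, l₂, l₃, i₁, i₂, i₃, hs, hWe⟩ := hW
  have hp : 0 < l₂ + l₃ := add_pos i₂.1 i₃.1
  obtain rfl : l₁ = 1 - l₂ - l₃ := by linarith
  obtain ⟨a, a'⟩ := A
  obtain ⟨b, b'⟩ := B
  obtain ⟨c, c'⟩ := C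
  obtain ⟨w, w'⟩ := W
  obtain ⟨x, x'⟩ := X
  simp only [Prod.smul_mk, Prod.mk_add_mk, Prod.mk.injEq, smul_eq_mul] at hWe
  simp only [det2, Prod.mk_sub_mk] at hd z₁ z₂
  obtain ⟨hw, hw'⟩ := hWe
  -- `(l₂ + l₃) X - (l₂ B + l₃ C)` has zero determinant with the independent vectors
  -- `W - A` and `C - B`, so it vanishes by Cramer's rule.
  have y₁ : (w - a) * ((l₂ + l₃) * x' - l₂ * b' - l₃ * c')
      - (w' - a') * ((l₂ + l₃) * x - l₂ * b - l₃ * c) = 0 := by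
    have e : (l₂ + l₃) * x' - l₂ * b' - l₃ * c' = (l₂ + l₃) * (x' - a') - (w' - a') := by
      rw [hw']; ring
    have e' : (l₂ + l₃) * x - l₂ * b - l₃ * c = (l₂ + l₃) * (x - a) - (w - a) := by
      rw [hw]; ring
    rw [e, e']
    linear_combination (l₂ + l₃) * z₁
  have y₂ : (c - b) * ((l₂ + l₃) * x' - l₂ * b' - l₃ * c')
      - (c' - b') * ((l₂ + l₃) * x - l₂ * b - l₃ * c) = 0 := by
    linear_combination (l₂ + l₃) * z₂
  have hx : (l₂ + l₃) * x - l₂ * b - l₃ * c = 0 := by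
    refine (mul_eq_zero.1 ?_).resolve_left hd.ne'
    linear_combination (c - b) * y₁ - (w - a) * y₂
  have hx' : (l₂ + l₃) * x' - l₂ * b' - l₃ * c' = 0 := by
    refine (mul_eq_zero.1 ?_).resolve_left hd.ne'
    linear_combination (c' - b') * y₁ - (w' - a') * y₂
  refine ⟨1 / (l₂ + l₃), l₃ / (l₂ + l₃), ?_, div_pos i₃.1 hp, ?_, ?_, ?_⟩
  · rw [lt_div_iff₀ hp]; linarith [i₁.1]
  · rw [div_lt_one hp]; linarith [i₂.1]
  · ext
    · simp only [Prod.fst_add, Prod.smul_fst, Prod.fst_sub, smul_eq_mul]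
      field_simp
      linear_combination hx - hw
    · simp only [Prod.snd_add, Prod.smul_snd, Prod.snd_sub, smul_eq_mul]
      field_simp
      linear_combination hx' - hw'
  · ext
    · simp only [Prod.fst_add, Prod.smul_fst, Prod.fst_sub, smul_eq_mul]
      field_simp
      linear_combination hx
    · simp only [Prod.snd_add, Prod.smul_snd, Prod.snd_sub, smul_eq_mul]
      field_simp
      linear_combination hx'

/-- Successive long diagonals `A → B → C` of the spiral turn left. Here `A₀, A, A₁` stand for
`P i, P (i+1), P (i+2)`, then `B₀, B, B₁` for the same points with index shifted by `k`, and
`C, C₁` for `P (i+2k+1), P (i+2k+2)`. -/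
lemma det2_diag_far_pos {A₀ A A₁ B₀ B B₁ C C₁ : ℝ × ℝ}
    (o₀ : 0 < ori A₀ A B) (t₀ : inTriangle A₀ A B B₀)
    (o₁ : 0 < ori A A₁ B₁) (t₁ : inTriangle A A₁ B₁ B)
    (turn : 0 < ori B₀ B B₁) (o₂ : 0 < ori B₀ B C)
    (o₃ : 0 < ori B B₁ C₁) (t₃ : inTriangle B B₁ C₁ C) :
    0 < det2 (B - A) (C - B) := by
  have db' := (sides_pos o₀ t₀).2.2
  have db := (sides_pos o₁ t₁).2.1
  have bc := (sides_pos o₃ t₃).1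
  -- The Plücker relation for `B - A`, `C - B`, `B₁ - B`, `B₀ - B`.
  have key : det2 (B - A) (C - B) * ori B₀ B B₁
      = det2 (B₁ - B) (C - B) * det2 (B - A) (B₀ - B)
        + ori B₀ B C * det2 (B - A) (B₁ - B) := by
    simp [ori, det2]
    ring
  have h : 0 < det2 (B - A) (C - B) * ori B₀ B B₁ := by rw [key]; positivity
  exact pos_of_mul_pos_left h turn.le

theorem stmt10 (P P' : ℤ → ℝ × ℝ) (k N : ℤ) (hk : 3 ≤ k)
    (hspiral : ∀ i ≥ N, 0 < ori (P i) (P (i+1)) (P (i+2)) ∧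
      0 < ori (P i) (P (i+1)) (P (i+k+1)) ∧
      inTriangle (P i) (P (i+1)) (P (i+k+1)) (P (i+k)))
    (hgen : ∀ i, ¬ Collinear ℝ {P i, P (i+1), P (i+k)} ∧
      ¬ Collinear ℝ {P i, P (i+1), P (i+k+1)} ∧
      ¬ Collinear ℝ {P i, P (i+k), P (i+k+1)} ∧
      ¬ Collinear ℝ {P (i+1), P (i+k), P (i+k+1)})
    (hP' : ∀ i, Collinear ℝ {P i, P (i+k), P' i} ∧
      Collinear ℝ {P (i+1), P (i+k+1), P' i}) :
    ∀ i ≥ N, 0 < ori (P' i) (P' (i+1)) (P' (i+2)) ∧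
      0 < ori (P' i) (P' (i+1)) (P' (i+k+1)) ∧
      inTriangle (P' i) (P' (i+1)) (P' (i+k+1)) (P' (i+k)) := by
  have idx : ∀ i, i + 1 + k = i + k + 1 := fun i => by ring
  have par : ∀ i ≥ N, ∃ s t : ℝ, 1 < s ∧ 0 < t ∧ t < 1 ∧
      P' i = P i + s • (P (i+k) - P i) ∧
      P' i = P (i+1) + t • (P (i+k+1) - P (i+1)) := fun i hi =>
    exists_params (hspiral i hi).2.1 (hspiral i hi).2.2 (hP' i).1 (hP' i).2
  intro i hi
  obtain ⟨-, t, -, -, ht1, -, e₀⟩ := par i hi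
  obtain ⟨s₁, t₁, hs₁, -, ht₁, e₁, f₁⟩ := par (i+1) (by linarith)
  obtain ⟨s₂, -, hs₂, -, -, e₂, -⟩ := par (i+2) (by linarith)
  obtain ⟨-, τ, -, hτ, hτ1, -, e₃⟩ := par (i+k) (by linarith)
  obtain ⟨s₄, -, hs₄, -, -, e₄, -⟩ := par (i+k+1) (by linarith)
  have turn := det2_diag_pos (hspiral (i+1) (by linarith)).2.1 (hspiral (i+1) (by linarith)).2.2
  have far : 0 < det2 (P (i+k+1) - P (i+1)) (P (i+k+1+k) - P (i+k+1)) := by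
    have h₀ := hspiral i hi
    have h₁ := hspiral (i+1) (by linarith)
    have h₂ := hspiral (i+k) (by linarith)
    have h₃ := hspiral (i+k+1) (by linarith)
    rw [show i+1+k+1 = i+k+2 by ring, idx] at h₁
    rw [show i+k+k+1 = i+k+1+k by ring] at h₂
    rw [show i+k+1+1 = i+k+2 by ring] at h₃
    exact det2_diag_far_pos h₀.2.1 h₀.2.2 h₁.2.1 h₁.2.2 h₂.1 h₂.2.1 h₃.2.1 h₃.2.2
  rw [show i+1+1 = i+2 by ring, show i+1+k+1 = i+2+k by ring] at f₁ turn
  rw [idx] at e₁ turn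
  rw [show i+k+k+1 = i+k+1+k by ring] at e₃
  have hst : 0 < s₁ - t := by linarith
  have hst' : 0 < s₂ - t₁ := by linarith
  refine ⟨?_, ?_, ?_⟩
  · have h := mul_pos (mul_pos hst hst') turn
    -- The side `P' i → P' (i+1)` is measured along the line of `P (i+1)`, the next along that of
    -- `P (i+2)`.
    have d₁ : P' (i+1) - P' i = (s₁ - t) • (P (i+k+1) - P (i+1)) := by
      rw [e₁, e₀]; module
    have d₂ : P' (i+2) - P' (i+1) = (s₂ - t₁) • (P (i+2+k) - P (i+2)) := by
      rw [e₂, f₁]; module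
    rw [ori, d₁, d₂]
    refine h.trans_eq ?_
    simp [det2]
    ring
  · have h := mul_pos (mul_pos hst (by linarith : 0 < s₄)) far
    rw [ori, e₀, e₁, e₄]
    refine h.trans_eq ?_
    simp [det2]
    ring
  · -- `P' (i+k)` divides `P (i+k+1)`, `P' (i+k+1)` in the ratio given by `τ / s₄`, and
    -- `P (i+k+1)` lies between `P' i` and `P' (i+1)`.
    have hs₄' : 0 < s₄ := by linarith
    have u0 : 0 < τ / s₄ := div_pos hτ hs₄'
    have u1 : τ / s₄ < 1 := by rw [div_lt_one hs₄']; linarith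
    have v0 : 0 < (1 - t) / (s₁ - t) := div_pos (by linarith) hst
    have v1 : (1 - t) / (s₁ - t) < 1 := by rw [div_lt_one hst]; linarith
    have hu : τ / s₄ * s₄ = τ := div_mul_cancel₀ _ hs₄'.ne'
    have hv : (1 - t) / (s₁ - t) * (s₁ - t) = 1 - t := div_mul_cancel₀ _ hst.ne'
    generalize τ / s₄ = u at *
    generalize (1 - t) / (s₁ - t) = v at *
    have p₁ : 0 < (1 - u) * (1 - v) := mul_pos (by linarith) (by linarith)
    have p₂ : 0 < (1 - u) * v := mul_pos (by linarith) v0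
    have hsum : (1 - u) * (1 - v) + (1 - u) * v + u = 1 := by ring
    refine ⟨(1 - u) * (1 - v), (1 - u) * v, u, ⟨p₁, by linarith⟩, ⟨p₂, by linarith⟩,
      ⟨u0, u1⟩, hsum, ?_⟩
    have mid : P (i+k+1) = (1 - v) • P' i + v • P' (i+1) := by
      have : (1 - v) • P' i + v • P' (i+1)
          = P (i+1) + (v * (s₁ - t) + t) • (P (i+k+1) - P (i+1)) := by
        rw [e₀, e₁]; module
      rw [this, hv]; module
    calc P' (i+k) = (1 - u) • P (i+k+1) + u • P' (i+k+1) := by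
          rw [e₃, e₄, ← hu]; module
      _ = _ := by
          rw [mid]; module
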